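/- Under assumption (B2), let (vₙ)ₙ and (wₙ)ₙ be sequences of words in 𝒲 with |vₙ| → ∞ and |wₙ| → ∞ such that lim_{n→∞} k(u,vₙ) and lim_{n→∞} k(u,wₙ) exist for every u ∈ 𝒲. Then lim_{n→∞} k(u,vₙ) = lim_{n→∞} k(u,wₙ) for every u ∈ 𝒲 if and only if lim_{n→∞} k_hom(u,vₙ) = lim_{n→∞} k_hom(u,wₙ) for every u ∈ 𝒲. (That is, the equivalence relations identifying Cauchy sequences in the inhomogeneous and homogeneous Martin compactifications are identical.) -/

import Mathlib

open Classical

namespace Martin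

/-- Finite words over the alphabet `Fin N` (the empty list is the empty word `∅`;
`w ++ [i]` is the word `wi` and `w.dropLast` is the parent `w⁻`). -/
abbrev Word (N : ℕ) := List (Fin N)

/-- The mass of a word: `m(w₁⋯wₙ) = m(w₁)⋯m(wₙ)`, `m(∅) = 1`. -/
noncomputable def mW {N : ℕ} (m : Fin N → ℝ) (w : Word N) : ℝ := (w.map m).prod

/-- Total mass of the equivalence class of `v`: `Σ_{v̂ ∼ v} m(v̂)`. -/
noncomputable def massCl {N : ℕ} (sim : Word N → Word N → Prop) (m : Fin N → ℝ)
    (v : Word N) : ℝ :=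
  ∑ᶠ u ∈ {u : Word N | sim u v}, mW m u

/-- Transition probability: `p(v,w) = m(w)/(Σ_{v̂∼v} m(v̂))` if `w = v̂i` for some
`v̂ ∼ v`, `i ∈ 𝒜`, and `0` otherwise. -/
noncomputable def pTrans {N : ℕ} (sim : Word N → Word N → Prop) (m : Fin N → ℝ)
    (v w : Word N) : ℝ :=
  if ∃ v' : Word N, ∃ i : Fin N, sim v' v ∧ w = v' ++ [i] then mW m w / massCl sim m v
  else 0

/-- `n`-step transition probabilities: `p₀(v,w) = δ_v(w)`,
`pₙ(v,w) = Σ_u pₙ₋₁(v,u) p(u,w)`. -/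
noncomputable def pn {N : ℕ} (sim : Word N → Word N → Prop) (m : Fin N → ℝ) :
    ℕ → Word N → Word N → ℝ
  | 0, v, w => if w = v then 1 else 0
  | n + 1, v, w => ∑ᶠ u : Word N, pn sim m n v u * pTrans sim m u w

/-- The Green function `g(v,w) = p_{|w|−|v|}(v,w)` (it equals `0` when `|w| < |v|`,
by truncated subtraction and since then `v ≠ w`). -/
noncomputable def green {N : ℕ} (sim : Word N → Word N → Prop) (m : Fin N → ℝ)
    (v w : Word N) : ℝ :=
  pn sim m (w.length - v.length) v w

/-- The function `q(v,w) = g(v,w)·(Σ_{v̂∼v} m(v̂))/m(w)` for `v ≠ w`, `q(v,v) = 1`. -/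
noncomputable def qfun {N : ℕ} (sim : Word N → Word N → Prop) (m : Fin N → ℝ)
    (v w : Word N) : ℝ :=
  if v = w then 1 else green sim m v w * massCl sim m v / mW m w

/-- The Martin kernel `k(v,w) = g(v,w)/g(∅,w)`. -/
noncomputable def mkernel {N : ℕ} (sim : Word N → Word N → Prop) (m : Fin N → ℝ)
    (v w : Word N) : ℝ :=
  green sim m v w / green sim m [] w

/-- `R(w)`: the number of words equivalent to `w`. -/
noncomputable def Rnum {N : ℕ} (sim : Word N → Word N → Prop) (w : Word N) : ℕ :=
  Set.ncard {u : Word N | sim u w}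

/-- Assumption (B2): for every word `w`, either all equivalent words have the same mass,
or all equivalent words have equivalent parents. -/
def B2 {N : ℕ} (sim : Word N → Word N → Prop) (m : Fin N → ℝ) : Prop :=
  ∀ w : Word N, (∀ w', sim w' w → mW m w' = mW m w) ∨
    (∀ w', sim w' w → sim w'.dropLast w.dropLast)

/-!
Write `M(v) = Σ_{v̂ ∼ v} m(v̂)` and `q(v,w) = g(v,w) M(v) / m(w)`. Since `g(∅,w) = m(w)`, the Martin
kernel is `k(v,w) = q(v,w) / M(v)` for `v ≠ w`. The value `q(v,wi)` is `1` or `0` according to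
whether `v ∼ w` when `|w| = |v|`, and the `m`-weighted average of `q(v,·)` over the class of `w`
when `|w| > |v|`. Two mass functions satisfying (B2) give the same averages, because on each class
either both are constant or `q(v,·)` is constant. Hence `q` does not depend on the mass function,
and `k` depends on it only through the factor `1 / M(v)`, which is independent of `w`.
-/

section

open Filter Topology

variable {N : ℕ} {sim : Word N → Word N → Prop} {m m' : Fin N → ℝ} {u v w : Word N}

lemma mW_pos (hm : ∀ a, 0 < m a) (w : Word N) : 0 < mW m w :=
  List.prod_pos (by simpa using fun a _ => hm a)

lemma mW_const (c : ℝ) (w : Word N) : mW (fun _ => c) w = c ^ w.length := by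
  simp [mW]

lemma sim_right_congr (hsim : Equivalence sim) (h : sim u w) : sim v u ↔ sim v w :=
  ⟨fun hv => hsim.trans hv h, fun hv => hsim.trans hv (hsim.symm h)⟩

/-- The equivalence class of `w` as a finset. It is cut out of the words of length `|w|`, so that
it is finite for every relation; no word is lost when equivalent words have equal length. -/
noncomputable def simClass (sim : Word N → Word N → Prop) (w : Word N) : Finset (Word N) :=
  {u ∈ (List.finite_length_eq (Fin N) w.length).toFinset | sim u w}

lemma mem_simClass (hlen : ∀ v w, sim v w → v.length = w.length) :
    u ∈ simClass sim w ↔ sim u w := by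
  simpa [simClass] using hlen u w

lemma length_eq_of_mem_simClass (hu : u ∈ simClass sim w) : u.length = w.length := by
  simp_all [simClass]

lemma simClass_eq_of_sim (hsim : Equivalence sim) (hlen : ∀ v w, sim v w → v.length = w.length)
    (h : sim u w) : simClass sim u = simClass sim w := by
  ext x
  rw [mem_simClass hlen, mem_simClass hlen, sim_right_congr hsim h]

lemma massCl_eq_sum (hlen : ∀ v w, sim v w → v.length = w.length) (m : Fin N → ℝ) (w : Word N) :
    massCl sim m w = ∑ u ∈ simClass sim w, mW m u :=
  finsum_mem_eq_sum_of_inter_support_eq _ (by ext u; simp [mem_simClass hlen])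

lemma massCl_eq_of_sim (hsim : Equivalence sim) (m : Fin N → ℝ) (h : sim u w) :
    massCl sim m u = massCl sim m w := by
  simp only [massCl, sim_right_congr hsim h]

lemma massCl_pos (hsim : Equivalence sim) (hlen : ∀ v w, sim v w → v.length = w.length)
    (hm : ∀ a, 0 < m a) (w : Word N) : 0 < massCl sim m w := by
  rw [massCl_eq_sum hlen]
  exact Finset.sum_pos (fun u _ => mW_pos hm u) ⟨w, (mem_simClass hlen).2 (hsim.refl w)⟩

lemma pTrans_concat (hsim : Equivalence sim) (m : Fin N → ℝ) (u w : Word N) (i : Fin N) :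
    pTrans sim m u (w ++ [i]) = if sim u w then mW m (w ++ [i]) / massCl sim m w else 0 := by
  have parent_sim : (∃ v' j, sim v' u ∧ w ++ [i] = v' ++ [j]) ↔ sim u w := by
    constructor
    · rintro ⟨v', j, hv', hw⟩
      exact List.append_inj_left' hw rfl ▸ hsim.symm hv'
    · exact fun h => ⟨w, i, hsim.symm h, rfl⟩
  simp only [pTrans, parent_sim]
  split_ifs with h
  · rw [massCl_eq_of_sim hsim m h]
  · rfl

lemma pn_succ_concat (hsim : Equivalence sim) (hlen : ∀ v w, sim v w → v.length = w.length)
    (m : Fin N → ℝ) (n : ℕ) (v w : Word N) (i : Fin N) :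
    pn sim m (n + 1) v (w ++ [i]) =
      (∑ u ∈ simClass sim w, pn sim m n v u) * (mW m (w ++ [i]) / massCl sim m w) := by
  have support_subset : (fun u => pn sim m n v u * pTrans sim m u (w ++ [i])).support ⊆
      simClass sim w := by
    intro u hu
    by_contra hu'
    rw [Finset.mem_coe, mem_simClass hlen] at hu'
    simp [pTrans_concat hsim, hu'] at hu
  rw [pn, finsum_eq_sum_of_support_subset _ support_subset, Finset.sum_mul]
  refine Finset.sum_congr rfl fun u hu => ?_
  rw [pTrans_concat hsim, if_pos ((mem_simClass hlen).1 hu)]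

lemma green_of_length_le (m : Fin N → ℝ) (h : w.length ≤ v.length) :
    green sim m v w = if w = v then 1 else 0 := by
  simp [green, pn, Nat.sub_eq_zero_of_le h]

lemma green_concat (hsim : Equivalence sim) (hlen : ∀ v w, sim v w → v.length = w.length)
    (m : Fin N → ℝ) (h : v.length ≤ w.length) (i : Fin N) :
    green sim m v (w ++ [i]) =
      (∑ u ∈ simClass sim w, green sim m v u) * (mW m (w ++ [i]) / massCl sim m w) := by
  have step_count : (w ++ [i]).length - v.length = w.length - v.length + 1 := by
    simp only [List.length_append, List.length_singleton]
    omega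
  rw [green, step_count, pn_succ_concat hsim hlen]
  congr 1
  refine Finset.sum_congr rfl fun u hu => ?_
  rw [green, length_eq_of_mem_simClass hu]

lemma green_nil_left (hsim : Equivalence sim) (hlen : ∀ v w, sim v w → v.length = w.length)
    (hm : ∀ a, 0 < m a) (w : Word N) : green sim m [] w = mW m w := by
  induction hn : w.length generalizing w with
  | zero =>
    rw [List.length_eq_zero_iff.1 hn]
    simp [green, pn, mW]
  | succ n ih =>
    obtain rfl | ⟨w, i, rfl⟩ := w.eq_nil_or_concat'
    · simp at hn
    have sum_green : ∑ u ∈ simClass sim w, green sim m [] u = massCl sim m w := by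
      rw [massCl_eq_sum hlen]
      refine Finset.sum_congr rfl fun u hu => ih u ?_
      simpa [length_eq_of_mem_simClass hu] using hn
    rw [green_concat hsim hlen m (Nat.zero_le _), sum_green,
      mul_div_cancel₀ _ (massCl_pos hsim hlen hm w).ne']

lemma qfun_of_length_le (m : Fin N → ℝ) (h : w.length ≤ v.length) :
    qfun sim m v w = if v = w then 1 else 0 := by
  rw [qfun, green_of_length_le m h]
  split_ifs <;> simp_all

lemma qfun_concat (hsim : Equivalence sim) (hlen : ∀ v w, sim v w → v.length = w.length)
    (hm : ∀ a, 0 < m a) (h : v.length ≤ w.length) (i : Fin N) :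
    qfun sim m v (w ++ [i]) =
      (∑ u ∈ simClass sim w, green sim m v u) * massCl sim m v / massCl sim m w := by
  have v_ne : v ≠ w ++ [i] := by
    rintro rfl
    simp at h
  rw [qfun, if_neg v_ne, green_concat hsim hlen m h]
  field_simp [(mW_pos hm (w ++ [i])).ne']

lemma qfun_concat_of_length_eq (hsim : Equivalence sim)
    (hlen : ∀ v w, sim v w → v.length = w.length) (hm : ∀ a, 0 < m a)
    (h : v.length = w.length) (i : Fin N) :
    qfun sim m v (w ++ [i]) = if sim v w then 1 else 0 := by
  have sum_green : ∑ u ∈ simClass sim w, green sim m v u = if sim v w then 1 else 0 := by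
    rw [Finset.sum_congr rfl fun u hu =>
      green_of_length_le m ((length_eq_of_mem_simClass hu).trans h.symm).le]
    simp [mem_simClass hlen]
  rw [qfun_concat hsim hlen hm h.le, sum_green]
  split_ifs with hvw
  · rw [one_mul, massCl_eq_of_sim hsim m hvw, div_self (massCl_pos hsim hlen hm w).ne']
  · rw [zero_mul, zero_div]

lemma qfun_concat_of_length_lt (hsim : Equivalence sim)
    (hlen : ∀ v w, sim v w → v.length = w.length) (hm : ∀ a, 0 < m a)
    (h : v.length < w.length) (i : Fin N) :
    qfun sim m v (w ++ [i]) = (simClass sim w).centerMass (mW m) (qfun sim m v) := by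
  have mW_mul_qfun : ∀ u ∈ simClass sim w,
      mW m u • qfun sim m v u = green sim m v u * massCl sim m v := by
    intro u hu
    have v_ne : v ≠ u := by
      rintro rfl
      exact h.ne (length_eq_of_mem_simClass hu)
    rw [qfun, if_neg v_ne, smul_eq_mul, mul_div_cancel₀ _ (mW_pos hm u).ne']
  rw [qfun_concat hsim hlen hm h.le, Finset.centerMass, Finset.sum_congr rfl mW_mul_qfun,
    ← massCl_eq_sum hlen, ← Finset.sum_mul, smul_eq_mul, div_eq_inv_mul]

lemma qfun_eq_of_sim_dropLast (hsim : Equivalence sim)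
    (hlen : ∀ v w, sim v w → v.length = w.length) (hm : ∀ a, 0 < m a)
    (hvw : v.length < w.length) (h : u.length = w.length) (h' : sim u.dropLast w.dropLast) :
    qfun sim m v u = qfun sim m v w := by
  obtain rfl | ⟨w, j, rfl⟩ := w.eq_nil_or_concat'
  · simp at hvw
  obtain rfl | ⟨u, i, rfl⟩ := u.eq_nil_or_concat'
  · simp at h
  simp only [List.dropLast_concat, List.length_append, List.length_singleton] at h' hvw h
  rw [qfun_concat hsim hlen hm (by omega), qfun_concat hsim hlen hm (by omega),
    simClass_eq_of_sim hsim hlen h', massCl_eq_of_sim hsim m h']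

lemma centerMass_simClass_qfun_of_sim_dropLast (hsim : Equivalence sim)
    (hlen : ∀ v w, sim v w → v.length = w.length) (hm : ∀ a, 0 < m a) (hm' : ∀ a, 0 < m' a)
    (hvw : v.length < w.length) (h : ∀ u, sim u w → sim u.dropLast w.dropLast) :
    (simClass sim w).centerMass (mW m') (qfun sim m v) = qfun sim m v w := by
  have qfun_const : ∀ u ∈ simClass sim w, mW m' u ≠ 0 →
      qfun sim m v u = Function.const _ (qfun sim m v w) u := fun u hu _ =>
    qfun_eq_of_sim_dropLast hsim hlen hm hvw (length_eq_of_mem_simClass hu)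
      (h u ((mem_simClass hlen).1 hu))
  have massCl_ne_zero := (massCl_pos hsim hlen hm' w).ne'
  rw [massCl_eq_sum hlen] at massCl_ne_zero
  rw [Finset.centerMass_congr_fun qfun_const, Finset.centerMass_const massCl_ne_zero]

lemma centerMass_simClass_of_mW_eq {E : Type*} [AddCommGroup E] [Module ℝ E]
    (hlen : ∀ v w, sim v w → v.length = w.length) (hw : mW m w ≠ 0)
    (h : ∀ u, sim u w → mW m u = mW m w) (f : Word N → E) :
    (simClass sim w).centerMass (mW m) f = (simClass sim w).centerMass (1 : Word N → ℝ) f := by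
  have mW_eq_smul_one : ∀ u ∈ simClass sim w, mW m u = (mW m w • (1 : Word N → ℝ)) u :=
    fun u hu => by simpa using h u ((mem_simClass hlen).1 hu)
  exact (Finset.centerMass_congr_weights mW_eq_smul_one).trans (Finset.centerMass_smul_left _ _ hw)

lemma centerMass_simClass_qfun_eq_of_B2 (hsim : Equivalence sim)
    (hlen : ∀ v w, sim v w → v.length = w.length) (hm : ∀ a, 0 < m a) (hm' : ∀ a, 0 < m' a)
    (hB2 : B2 sim m) (hB2' : B2 sim m') (h : v.length < w.length) :
    (simClass sim w).centerMass (mW m) (qfun sim m v) =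
      (simClass sim w).centerMass (mW m') (qfun sim m v) := by
  have of_parents_sim (hpar : ∀ u, sim u w → sim u.dropLast w.dropLast) :
      (simClass sim w).centerMass (mW m) (qfun sim m v) =
        (simClass sim w).centerMass (mW m') (qfun sim m v) := by
    rw [centerMass_simClass_qfun_of_sim_dropLast hsim hlen hm hm h hpar,
      centerMass_simClass_qfun_of_sim_dropLast hsim hlen hm hm' h hpar]
  obtain hmass | hpar := hB2 w
  · obtain hmass' | hpar := hB2' w
    · rw [centerMass_simClass_of_mW_eq hlen (mW_pos hm w).ne' hmass,
        centerMass_simClass_of_mW_eq hlen (mW_pos hm' w).ne' hmass']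
    · exact of_parents_sim hpar
  · exact of_parents_sim hpar

theorem qfun_eq_of_B2 (hsim : Equivalence sim) (hlen : ∀ v w, sim v w → v.length = w.length)
    (hm : ∀ a, 0 < m a) (hm' : ∀ a, 0 < m' a) (hB2 : B2 sim m) (hB2' : B2 sim m')
    (v w : Word N) : qfun sim m v w = qfun sim m' v w := by
  induction hn : w.length generalizing w with
  | zero => rw [qfun_of_length_le m (by omega), qfun_of_length_le m' (by omega)]
  | succ n ih =>
    obtain rfl | ⟨w, i, rfl⟩ := w.eq_nil_or_concat'
    · simp at hn
    have length_w : w.length = n := by simpa using hn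
    obtain hwv | hvw | hvw := lt_trichotomy w.length v.length
    · rw [qfun_of_length_le m (by omega), qfun_of_length_le m' (by omega)]
    · rw [qfun_concat_of_length_eq hsim hlen hm hvw.symm,
        qfun_concat_of_length_eq hsim hlen hm' hvw.symm]
    · rw [qfun_concat_of_length_lt hsim hlen hm hvw, qfun_concat_of_length_lt hsim hlen hm' hvw,
        centerMass_simClass_qfun_eq_of_B2 hsim hlen hm hm' hB2 hB2' hvw]
      exact Finset.centerMass_congr_fun fun u hu _ =>
        ih u ((length_eq_of_mem_simClass hu).trans length_w)

lemma mkernel_eq_qfun_div (hsim : Equivalence sim) (hlen : ∀ v w, sim v w → v.length = w.length)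
    (hm : ∀ a, 0 < m a) (h : v ≠ w) : mkernel sim m v w = qfun sim m v w / massCl sim m v := by
  rw [mkernel, green_nil_left hsim hlen hm, qfun, if_neg h, div_right_comm,
    mul_div_cancel_right₀ _ (massCl_pos hsim hlen hm v).ne']

lemma mkernel_eq_massCl_div_mul (hsim : Equivalence sim)
    (hlen : ∀ v w, sim v w → v.length = w.length) (hm : ∀ a, 0 < m a) (hm' : ∀ a, 0 < m' a)
    (hB2 : B2 sim m) (hB2' : B2 sim m') (h : v ≠ w) :
    mkernel sim m' v w = massCl sim m v / massCl sim m' v * mkernel sim m v w := by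
  rw [mkernel_eq_qfun_div hsim hlen hm h, mkernel_eq_qfun_div hsim hlen hm' h,
    qfun_eq_of_B2 hsim hlen hm hm' hB2 hB2']
  field_simp [(massCl_pos hsim hlen hm v).ne']

lemma tendsto_mkernel_of_B2 (hsim : Equivalence sim)
    (hlen : ∀ v w, sim v w → v.length = w.length) (hm : ∀ a, 0 < m a) (hm' : ∀ a, 0 < m' a)
    (hB2 : B2 sim m) (hB2' : B2 sim m') {ι : Type*} {l : Filter ι} {x : ι → Word N}
    (hx : Tendsto (fun n => (x n).length) l atTop) {L : ℝ}
    (hL : Tendsto (fun n => mkernel sim m u (x n)) l (𝓝 L)) :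
    Tendsto (fun n => mkernel sim m' u (x n)) l (𝓝 (massCl sim m u / massCl sim m' u * L)) := by
  refine (hL.const_mul _).congr' ?_
  filter_upwards [hx.eventually_gt_atTop u.length] with n hn
  have u_ne : u ≠ x n := ne_of_apply_ne List.length hn.ne
  exact (mkernel_eq_massCl_div_mul hsim hlen hm hm' hB2 hB2' u_ne).symm

theorem eqsim_iff_eqsim_hom_general (hsim : Equivalence sim)
    (hlen : ∀ v w, sim v w → v.length = w.length) (hm : ∀ a, 0 < m a) (hm' : ∀ a, 0 < m' a)
    (hB2 : B2 sim m) (hB2' : B2 sim m') {ι : Type*} {l : Filter ι} {v w : ι → Word N}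
    (hv : Tendsto (fun n => (v n).length) l atTop)
    (hw : Tendsto (fun n => (w n).length) l atTop) :
    (∀ u, ∃ L, Tendsto (fun n => mkernel sim m u (v n)) l (𝓝 L) ∧
        Tendsto (fun n => mkernel sim m u (w n)) l (𝓝 L)) ↔
      ∀ u, ∃ L, Tendsto (fun n => mkernel sim m' u (v n)) l (𝓝 L) ∧
        Tendsto (fun n => mkernel sim m' u (w n)) l (𝓝 L) := by
  constructor <;> intro H u <;> obtain ⟨L, hvL, hwL⟩ := H u
  · exact ⟨_, tendsto_mkernel_of_B2 hsim hlen hm hm' hB2 hB2' hv hvL,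
      tendsto_mkernel_of_B2 hsim hlen hm hm' hB2 hB2' hw hwL⟩
  · exact ⟨_, tendsto_mkernel_of_B2 hsim hlen hm' hm hB2' hB2 hv hvL,
      tendsto_mkernel_of_B2 hsim hlen hm' hm hB2' hB2 hw hwL⟩

lemma B2_const (hlen : ∀ v w, sim v w → v.length = w.length) (c : ℝ) : B2 sim fun _ => c :=
  fun w => .inl fun u h => by rw [mW_const, mW_const, hlen u w h]

end

/-- Lemma 5.3: under (B2), for two sequences of words with lengths
tending to infinity along which all inhomogeneous Martin kernel limits exist, the
limits agree for every `u` iff the homogeneous limits agree for every `u`. -/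
theorem eqsim_iff_eqsim_hom {N : ℕ} (hN : 2 ≤ N)
    (sim : Word N → Word N → Prop) (hsim : Equivalence sim)
    (hlen : ∀ v w : Word N, sim v w → v.length = w.length)
    (m : Fin N → ℝ) (hm : ∀ a, m a ∈ Set.Ioo (0 : ℝ) 1)
    (hm1 : ∑ a, m a = 1) (hB2 : B2 sim m) :
    ∀ v w : ℕ → Word N,
      Filter.Tendsto (fun n => (v n).length) Filter.atTop Filter.atTop →
      Filter.Tendsto (fun n => (w n).length) Filter.atTop Filter.atTop →
      (∀ u : Word N, ∃ L : ℝ,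
        Filter.Tendsto (fun n => mkernel sim m u (v n)) Filter.atTop (nhds L)) →
      (∀ u : Word N, ∃ L : ℝ,
        Filter.Tendsto (fun n => mkernel sim m u (w n)) Filter.atTop (nhds L)) →
      ((∀ u : Word N, ∃ L : ℝ,
          Filter.Tendsto (fun n => mkernel sim m u (v n)) Filter.atTop (nhds L) ∧
          Filter.Tendsto (fun n => mkernel sim m u (w n)) Filter.atTop (nhds L)) ↔
       (∀ u : Word N, ∃ L : ℝ,
          Filter.Tendsto (fun n => mkernel sim (fun _ : Fin N => (N : ℝ)⁻¹) u (v n))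
            Filter.atTop (nhds L) ∧
          Filter.Tendsto (fun n => mkernel sim (fun _ : Fin N => (N : ℝ)⁻¹) u (w n))
            Filter.atTop (nhds L))) := by
  exact fun v w hv hw _ _ => eqsim_iff_eqsim_hom_general hsim hlen (fun a => (hm a).1)
    (fun a => inv_pos.2 (Nat.cast_pos.2 a.pos)) hB2 (B2_const hlen _) hv hw

end Martin
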